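/- Let t_j := (Σ_{σ∈Λ_j} m_σ log m_σ)/(Σ_{σ∈Λ_j} m_σ log c_σ) and s_k := u_k/l_k as above, with P irreducible. Then there exist a constant C_3 and, for each large j, integers k_j^{(1)}, k_j^{(2)} ∈ [k_{1j}, k_{2j}] such that s_{k_j^{(1)}} − C_3/j ≤ t_j ≤ s_{k_j^{(2)}} + C_3/j, where k_{1j} = min_{σ∈Λ_j}|σ| and k_{2j} = max_{σ∈Λ_j}|σ|. -/

import Mathlib

open Finset

/-- Product of transition weights along a word (list of letters). -/
def pword {N : ℕ} (P : Matrix (Fin N) (Fin N) ℝ) (l : List (Fin N)) : ℝ :=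
  ((l.zip l.tail).map fun ab => P ab.1 ab.2).prod

/-- Admissible word: nonempty with positive transition weights. -/
def adm {N : ℕ} (P : Matrix (Fin N) (Fin N) ℝ) (l : List (Fin N)) : Prop :=
  l ≠ [] ∧ l.Chain' fun a b => 0 < P a b

/-- `m_σ = q_{σ_1} p_σ`. -/
def mlist {N : ℕ} (q : Fin N → ℝ) (P : Matrix (Fin N) (Fin N) ℝ)
    (l : List (Fin N)) : ℝ :=
  (l.map q).headI * pword P l

/-- Product of the entries of `A` along a word of length `k+1`. -/
noncomputable def wprod {N k : ℕ} (A : Matrix (Fin N) (Fin N) ℝ)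
    (σ : Fin (k + 1) → Fin N) : ℝ :=
  ∏ t : Fin k, A (σ t.castSucc) (σ t.succ)

/-- `u_k = ∑_{σ ∈ G_k} m_σ log m_σ` (convention `0 log 0 = 0`). -/
noncomputable def useq {N : ℕ} (q : Fin N → ℝ) (P : Matrix (Fin N) (Fin N) ℝ)
    (k : ℕ) : ℝ :=
  ∑ σ : Fin (k - 1 + 1) → Fin N,
    (q (σ 0) * wprod P σ) * Real.log (q (σ 0) * wprod P σ)

/-- `l_k = ∑_{σ ∈ G_k} m_σ log c_σ`. -/
noncomputable def lseq {N : ℕ} (q : Fin N → ℝ) (P c : Matrix (Fin N) (Fin N) ℝ)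
    (k : ℕ) : ℝ :=
  ∑ σ : Fin (k - 1 + 1) → Fin N,
    (q (σ 0) * wprod P σ) * Real.log (wprod c σ)

section aux
variable {N : ℕ}

theorem pword_cons (P : Matrix (Fin N) (Fin N) ℝ) (a b : Fin N) (l : List (Fin N)) :
    pword P (a :: b :: l) = P a b * pword P (b :: l) := by
  simp [pword]

theorem pword_snoc (P : Matrix (Fin N) (Fin N) ℝ) (l : List (Fin N)) (a b : Fin N) :
    pword P (l ++ [a] ++ [b]) = pword P (l ++ [a]) * P a b := by
  induction l with
  | nil => simp [pword]
  | cons x l ih =>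
    cases l with
    | nil => simp [pword]
    | cons y l =>
      simp only [List.cons_append] at ih ⊢
      rw [pword_cons, pword_cons, ih, mul_assoc]

theorem wprod_eq (A : Matrix (Fin N) (Fin N) ℝ) (k : ℕ) (σ : Fin (k + 1) → Fin N) :
    wprod A σ = pword A (List.ofFn σ) := by
  induction k with
  | zero => simp [wprod, pword]
  | succ k ih =>
    have h := ih (fun i => σ i.succ)
    rw [List.ofFn_succ] at h
    rw [List.ofFn_succ, List.ofFn_succ, pword_cons, ← h]
    simp [wprod, Fin.prod_univ_succ]

theorem mlist_ofFn (q : Fin N → ℝ) (A : Matrix (Fin N) (Fin N) ℝ) (k : ℕ) (σ : Fin (k + 1) → Fin N) :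
    mlist q A (List.ofFn σ) = q (σ 0) * wprod A σ := by
  rw [wprod_eq, mlist]; congr 1; simp [List.ofFn_succ]

theorem pword_nonneg {P : Matrix (Fin N) (Fin N) ℝ} (hnn : ∀ i j, 0 ≤ P i j)
    (l : List (Fin N)) : 0 ≤ pword P l := by
  apply List.prod_nonneg
  intro x hx
  simp only [List.mem_map] at hx
  obtain ⟨ab, _, rfl⟩ := hx
  exact hnn _ _

theorem adm_snoc (P : Matrix (Fin N) (Fin N) ℝ) (l : List (Fin N)) (a b : Fin N) :
    adm P (l ++ [a] ++ [b]) ↔ adm P (l ++ [a]) ∧ 0 < P a b := by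
  unfold adm
  have : (l ++ [a] ++ [b]).Chain' (fun a b => 0 < P a b) ↔
    (l ++ [a]).Chain' (fun a b => 0 < P a b) ∧ 0 < P a b := by
    show List.IsChain _ _ ↔ List.IsChain _ _ ∧ _
    rw [List.isChain_append]
    simp
  rw [this]; simp

/-- Induction on nonempty lists from the right. -/
theorem snoc_ind {p : List (Fin N) → Prop} (h1 : ∀ a, p [a])
    (h2 : ∀ l a b, p (l ++ [a]) → p (l ++ [a] ++ [b])) (l : List (Fin N)) (hl : l ≠ []) : p l := by
  induction l using List.reverseRecOn with
  | nil => exact absurd rfl hl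
  | append_singleton l b ih =>
    rcases List.eq_nil_or_concat l with rfl | ⟨l', a, rfl⟩
    · exact h1 b
    · have := h2 l' a b
      simp only [List.concat_eq_append] at *
      exact this (ih (by simp))

theorem adm_single (P : Matrix (Fin N) (Fin N) ℝ) (a : Fin N) : adm P [a] := by
  refine ⟨by simp, ?_⟩
  show List.IsChain _ _
  simp

theorem pword_single (P : Matrix (Fin N) (Fin N) ℝ) (a : Fin N) : pword P [a] = 1 := by
  simp [pword]

theorem adm_pos {P : Matrix (Fin N) (Fin N) ℝ} (l : List (Fin N)) (h : adm P l) :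
    0 < pword P l := by
  refine snoc_ind (p := fun l => adm P l → 0 < pword P l) ?_ ?_ l h.1 h
  · intro a _; simp [pword]
  · intro l a b ih h
    rw [adm_snoc] at h
    rw [pword_snoc]
    exact mul_pos (ih h.1) h.2

theorem nadm_zero {P : Matrix (Fin N) (Fin N) ℝ} (hnn : ∀ i j, 0 ≤ P i j) (l : List (Fin N))
    (hl : l ≠ []) (h : ¬ adm P l) : pword P l = 0 := by
  revert h
  refine snoc_ind (p := fun l => ¬ adm P l → pword P l = 0) ?_ ?_ l hl
  · intro a h; exact absurd (adm_single P a) h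
  · intro l a b ih h
    rw [adm_snoc] at h
    rw [pword_snoc]
    by_cases h1 : adm P (l ++ [a])
    · have : ¬ 0 < P a b := fun h2 => h ⟨h1, h2⟩
      rw [le_antisymm (not_lt.1 this) (hnn a b), mul_zero]
    · rw [ih h1, zero_mul]

/-- additive sums along a word -/
def gsum (g : Fin N → Fin N → ℝ) (l : List (Fin N)) : ℝ :=
  ((l.zip l.tail).map fun ab => g ab.1 ab.2).sum

theorem gsum_cons (P : Fin N → Fin N → ℝ) (a b : Fin N) (l : List (Fin N)) :
    gsum P (a :: b :: l) = P a b + gsum P (b :: l) := by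
  simp [gsum]

theorem gsum_snoc (P : Fin N → Fin N → ℝ) (l : List (Fin N)) (a b : Fin N) :
    gsum P (l ++ [a] ++ [b]) = gsum P (l ++ [a]) + P a b := by
  induction l with
  | nil => simp [gsum]
  | cons x l ih =>
    cases l with
    | nil => simp [gsum]
    | cons y l =>
      simp only [List.cons_append] at ih ⊢
      rw [gsum_cons, gsum_cons, ih, add_assoc]

theorem log_pword {P A : Matrix (Fin N) (Fin N) ℝ} (hA : ∀ i j, 0 < P i j → 0 < A i j)
    (l : List (Fin N)) (h : adm P l) :
    0 < pword A l ∧ Real.log (pword A l) = gsum (fun i j => Real.log (A i j)) l := by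
  refine snoc_ind (p := fun l => adm P l → 0 < pword A l ∧ Real.log (pword A l) =
    gsum (fun i j => Real.log (A i j)) l) ?_ ?_ l h.1 h
  · intro a _; simp [pword, gsum]
  · intro l a b ih h
    rw [adm_snoc] at h
    obtain ⟨h1, h2⟩ := ih h.1
    rw [pword_snoc, gsum_snoc, Real.log_mul h1.ne' (hA _ _ h.2).ne', h2]
    exact ⟨mul_pos h1 (hA _ _ h.2), rfl⟩

theorem mlist_snoc (q : Fin N → ℝ) (P : Matrix (Fin N) (Fin N) ℝ) (l : List (Fin N)) (a b : Fin N) :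
    mlist q P (l ++ [a] ++ [b]) = mlist q P (l ++ [a]) * P a b := by
  unfold mlist
  rw [pword_snoc, ← mul_assoc]
  congr 2
  cases l <;> simp

/-- words of length `n+1` -/
def Lw (N n : ℕ) : Finset (List (Fin N)) :=
  (univ : Finset (Fin (n + 1) → Fin N)).image List.ofFn

theorem mem_Lw {n : ℕ} {l : List (Fin N)} : l ∈ Lw N n ↔ l.length = n + 1 := by
  unfold Lw
  simp only [mem_image, mem_univ, true_and]
  constructor
  · rintro ⟨σ, rfl⟩; simp
  · intro h
    refine ⟨fun i => l.get (i.cast h.symm), ?_⟩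
    apply List.ext_get
    · simp [h]
    · intro k h1 h2
      rw [List.get_ofFn]
      simp

theorem sum_Lw {n : ℕ} (F : List (Fin N) → ℝ) :
    ∑ l ∈ Lw N n, F l = ∑ σ : Fin (n + 1) → Fin N, F (List.ofFn σ) := by
  unfold Lw
  rw [sum_image]
  intro a _ b _ h
  exact List.ofFn_injective h

theorem sum_Lw_zero (F : List (Fin N) → ℝ) : ∑ l ∈ Lw N 0, F l = ∑ a, F [a] := by
  rw [sum_Lw]
  refine Fintype.sum_equiv (Equiv.funUnique (Fin 1) (Fin N)) _ _ ?_
  intro σ; simp [Equiv.funUnique]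

theorem sum_Lw_succ {n : ℕ} (F : List (Fin N) → ℝ) :
    ∑ l ∈ Lw N (n + 1), F l = ∑ l ∈ Lw N n, ∑ b, F (l ++ [b]) := by
  rw [sum_Lw, sum_Lw, ← (Fin.snocEquiv (fun _ : Fin (n + 2) => Fin N)).sum_comp,
    Fintype.sum_prod_type, sum_comm]
  refine sum_congr rfl fun σ _ => sum_congr rfl fun b _ => ?_
  congr 1
  rw [List.ofFn_succ']
  simp [Fin.snocEquiv]

/-- max principle -/
theorem max_principle (P : Matrix (Fin N) (Fin N) ℝ)
    (hnn : ∀ i j, 0 ≤ P i j) (hrow : ∀ i, ∑ j, P i j = 1)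
    (hirr : ∀ i j, ∃ m, 1 ≤ m ∧ 0 < (P ^ m) i j) (h : Fin N → ℝ)
    (hh : ∀ i, h i ≤ ∑ j, P i j * h j) (x y : Fin N) : h x = h y := by
  have key : ∀ m : ℕ, (∀ i j, 0 ≤ (P ^ m) i j) ∧ (∀ i, ∑ j, (P ^ m) i j = 1) ∧
      ∀ i, h i ≤ ∑ j, (P ^ m) i j * h j := by
    intro m
    induction m with
    | zero => 
      refine ⟨fun i j => ?_, fun i => ?_, fun i => ?_⟩
      · simp only [pow_zero, Matrix.one_apply]; split_ifs <;> norm_num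
      · simp [Matrix.one_apply]
      · simp [Matrix.one_apply]
    | succ m ih =>
      obtain ⟨h1, h2, h3⟩ := ih
      refine ⟨fun i j => ?_, fun i => ?_, fun i => ?_⟩
      · rw [pow_succ, Matrix.mul_apply]
        exact sum_nonneg fun k _ => mul_nonneg (h1 _ _) (hnn _ _)
      · simp only [pow_succ, Matrix.mul_apply]
        rw [sum_comm]
        simp only [← mul_sum, hrow, mul_one, h2]
      · refine (h3 i).trans ?_
        simp only [pow_succ, Matrix.mul_apply, sum_mul]
        rw [sum_comm]
        refine sum_le_sum fun j _ => ?_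
        simp only [mul_assoc, ← mul_sum]
        exact mul_le_mul_of_nonneg_left (hh j) (h1 _ _)
  obtain ⟨z, hz⟩ := @Finite.exists_max _ _ _ ⟨x⟩ _ h
  have : ∀ w, h w = h z := by
    intro w
    obtain ⟨m, _, hm⟩ := hirr z w
    obtain ⟨h1, h2, h3⟩ := key m
    have h4 : ∑ j, (P ^ m) z j * (h z - h j) ≤ 0 := by
      simp only [mul_sub, sum_sub_distrib, ← sum_mul, h2, one_mul]
      linarith [h3 z]
    have h5 : (P ^ m) z w * (h z - h w) ≤ ∑ j, (P ^ m) z j * (h z - h j) :=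
      single_le_sum (f := fun j => (P ^ m) z j * (h z - h j))
        (fun j _ => mul_nonneg (h1 _ _) (sub_nonneg.2 (hz j))) (mem_univ w)
    have h6 : h z - h w ≤ 0 := by
      by_contra hcon
      push Not at hcon
      have := mul_pos hm hcon
      linarith
    linarith [hz w]
  rw [this x, this y]

theorem poisson (P : Matrix (Fin N) (Fin N) ℝ)
    (hnn : ∀ i j, 0 ≤ P i j) (hrow : ∀ i, ∑ j, P i j = 1)
    (hirr : ∀ i j, ∃ m, 1 ≤ m ∧ 0 < (P ^ m) i j) (x0 : Fin N) (f : Fin N → ℝ) :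
    ∃ (h : Fin N → ℝ) (γ : ℝ), ∀ i, f i + ∑ j, P i j * h j = h i + γ := by
  let T : (Fin N → ℝ) →ₗ[ℝ] (Fin N → ℝ) :=
    { toFun := fun h i => h i - ∑ j, P i j * h j + h x0
      map_add' := by
        intro a b; ext i; simp [mul_add, sum_add_distrib]; ring
      map_smul' := by
        intro r a; ext i
        have : ∑ j, P i j * (r * a j) = r * ∑ j, P i j * a j := by
          rw [mul_sum]; exact sum_congr rfl fun j _ => by ring
        simp [this]; ring }
  have hinj : Function.Injective T := by
    rw [← LinearMap.ker_eq_bot, LinearMap.ker_eq_bot']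
    intro h hh
    have h0 : ∀ i, h i - ∑ j, P i j * h j + h x0 = 0 := fun i => congrFun hh i
    obtain ⟨z, hz⟩ := @Finite.exists_max _ _ _ ⟨x0⟩ _ h
    obtain ⟨w, hw⟩ := @Finite.exists_min _ _ _ ⟨x0⟩ _ h
    have e1 : ∑ j, P z j * h j ≤ h z := by
      calc _ ≤ ∑ j, P z j * h z := sum_le_sum fun j _ => mul_le_mul_of_nonneg_left (hz j) (hnn _ _)
        _ = h z := by rw [← sum_mul, hrow, one_mul]
    have e2 : h w ≤ ∑ j, P w j * h j := by
      calc h w = ∑ j, P w j * h w := by rw [← sum_mul, hrow, one_mul]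
        _ ≤ _ := sum_le_sum fun j _ => mul_le_mul_of_nonneg_left (hw j) (hnn _ _)
    have e3 : h x0 = 0 := by linarith [h0 z, h0 w]
    ext i
    rw [max_principle P hnn hrow hirr h (fun i => by linarith [h0 i]) i x0, e3]; rfl
  have hsurj := LinearMap.injective_iff_surjective.1 hinj
  obtain ⟨h, hh⟩ := hsurj f
  refine ⟨h, h x0, fun i => ?_⟩
  have : h i - ∑ j, P i j * h j + h x0 = f i := congrFun hh i
  linarith

theorem sum_weighted_abs_le (m a : List (Fin N) → ℝ) (B : Finset (List (Fin N))) (K : ℝ)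
    (hm : ∀ l ∈ B, 0 ≤ m l) (h1 : ∑ l ∈ B, m l = 1) (ha : ∀ l ∈ B, |a l| ≤ K) :
    |∑ l ∈ B, m l * a l| ≤ K := by
  calc _ ≤ ∑ l ∈ B, |m l * a l| := abs_sum_le_sum_abs _ _
    _ ≤ ∑ l ∈ B, m l * K := sum_le_sum fun l hl => by
        rw [abs_mul, abs_of_nonneg (hm l hl)]
        exact mul_le_mul_of_nonneg_left (ha l hl) (hm l hl)
    _ = K := by rw [← sum_mul, h1, one_mul]

/-- `B` is a (finite) stopping cut. -/
def IsCut (P : Matrix (Fin N) (Fin N) ℝ) (B : Finset (List (Fin N))) : Prop :=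
  (∀ l ∈ B, l ≠ []) ∧
  ∀ Φ : List (Fin N) → ℝ, (∀ l a, ∑ b, Φ (l ++ [a] ++ [b]) = Φ (l ++ [a])) →
    (∀ l, l ≠ [] → ¬ adm P l → Φ l = 0) → ∑ l ∈ B, Φ l = ∑ a, Φ [a]

theorem isCut_Lw (P : Matrix (Fin N) (Fin N) ℝ) (n : ℕ) : IsCut P (Lw N n) := by
  refine ⟨fun l hl h => ?_, fun Φ h1 h2 => ?_⟩
  · rw [mem_Lw, h] at hl; simp at hl
  · induction n with
    | zero => exact sum_Lw_zero Φ
    | succ n ih =>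
      rw [sum_Lw_succ, ← ih]
      refine sum_congr rfl fun l hl => ?_
      rw [mem_Lw] at hl
      rcases List.eq_nil_or_concat l with rfl | ⟨l', a, rfl⟩
      · simp at hl
      · simpa using h1 l' a

theorem mlist_zero {P : Matrix (Fin N) (Fin N) ℝ} (hnn : ∀ i j, 0 ≤ P i j) (q : Fin N → ℝ)
    (l : List (Fin N)) (hl : l ≠ []) (h : ¬ adm P l) : mlist q P l = 0 := by
  rw [mlist, nadm_zero hnn l hl h, mul_zero]

theorem mlist_nonneg {P : Matrix (Fin N) (Fin N) ℝ} (hnn : ∀ i j, 0 ≤ P i j) (q : Fin N → ℝ)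
    (hq : ∀ i, 0 < q i) (l : List (Fin N)) (hl : l ≠ []) : 0 ≤ mlist q P l := by
  cases l with
  | nil => exact absurd rfl hl
  | cons a l => exact mul_nonneg (by simpa using (hq a).le) (pword_nonneg hnn _)

theorem cut_mass {P : Matrix (Fin N) (Fin N) ℝ}
    (hnn : ∀ i j, 0 ≤ P i j) (hrow : ∀ i, ∑ j, P i j = 1)
    (q : Fin N → ℝ) (hq1 : ∑ i, q i = 1)
    (B : Finset (List (Fin N))) (hB : IsCut P B) : ∑ l ∈ B, mlist q P l = 1 := by
  rw [hB.2 _ ?_ (fun l => mlist_zero hnn q l)]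
  · simpa [mlist, pword] using hq1
  · intro l a
    simp only [mlist_snoc, ← mul_sum, hrow, mul_one]

theorem cut_bound {P A : Matrix (Fin N) (Fin N) ℝ}
    (hnn : ∀ i j, 0 ≤ P i j) (hrow : ∀ i, ∑ j, P i j = 1)
    (q : Fin N → ℝ) (hq : ∀ i, 0 < q i) (hq1 : ∑ i, q i = 1)
    (hA : ∀ i j, 0 < P i j → 0 < A i j)
    (h : Fin N → ℝ) (γ : ℝ)
    (hh : ∀ i, ∑ j, P i j * Real.log (A i j) + ∑ j, P i j * h j = h i + γ) :
    ∃ C : ℝ, ∀ B, IsCut P B →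
      |∑ l ∈ B, mlist q P l * Real.log (pword A l) -
        γ * ∑ l ∈ B, mlist q P l * ((l.length : ℝ) - 1)| ≤ C := by
  refine ⟨|∑ a, q a * h a| + ∑ a, |h a|, fun B hB => ?_⟩
  set g : Fin N → Fin N → ℝ := fun i j => Real.log (A i j) with hg
  let M : List (Fin N) → ℝ := fun l => gsum g l + (l.map h).getLastD 0 - γ * ((l.length : ℝ) - 1)
  have hM := hB.2 (fun l => mlist q P l * M l) ?_ ?_
  · have e1 : ∑ l ∈ B, mlist q P l * Real.log (pword A l) -
        γ * ∑ l ∈ B, mlist q P l * ((l.length : ℝ) - 1) =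
        ∑ l ∈ B, mlist q P l * M l - ∑ l ∈ B, mlist q P l * (l.map h).getLastD 0 := by
      rw [mul_sum, ← sum_sub_distrib, ← sum_sub_distrib]
      refine sum_congr rfl fun l hl => ?_
      by_cases hadm : adm P l
      · rw [(log_pword hA l hadm).2]
        simp only [M, hg]; ring
      · rw [mlist_zero hnn q l (hB.1 l hl) hadm]; ring
    rw [e1, hM]
    refine (abs_sub _ _).trans (add_le_add (le_of_eq ?_) ?_)
    · simp [mlist, pword, M, gsum]
    · refine sum_weighted_abs_le _ _ B _ (fun l hl => mlist_nonneg hnn q hq l (hB.1 l hl))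
        (cut_mass hnn hrow q hq1 B hB) (fun l hl => ?_)
      rcases List.eq_nil_or_concat l with rfl | ⟨l', a, rfl⟩
      · exact absurd rfl (hB.1 _ hl)
      · simp only [List.concat_eq_append, List.map_append, List.map_cons, List.map_nil,
          List.getLastD_concat]
        exact single_le_sum (f := fun a => |h a|) (fun j _ => abs_nonneg _) (mem_univ a)
  · intro l a
    simp only [mlist_snoc, mul_assoc, ← mul_sum]
    congr 1
    have : ∀ b, M (l ++ [a] ++ [b]) = gsum g (l ++ [a]) + g a b + h b - γ * ((l.length : ℝ) + 1) := by
      intro b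
      simp only [M, gsum_snoc]
      simp
      left; ring
    simp only [this]
    have e2 : M (l ++ [a]) = gsum g (l ++ [a]) + h a - γ * (l.length : ℝ) := by
      simp [M]
    rw [e2]
    have := hh a
    have e3 : ∑ b, P a b * (gsum g (l ++ [a]) + g a b + h b - γ * ((l.length : ℝ) + 1)) =
      (∑ b, P a b) * (gsum g (l ++ [a]) - γ * ((l.length : ℝ) + 1)) +
        (∑ j, P a j * Real.log (A a j) + ∑ j, P a j * h j) := by
      rw [sum_mul, ← sum_add_distrib, ← sum_add_distrib]
      exact sum_congr rfl fun b _ => by simp only [hg]; ring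
    rw [e3, this, hrow]; ring
  · intro l hl hadm
    simp only [mlist_zero hnn q l hl hadm, zero_mul]

open Classical in
/-- words of length `n+1` stopped at their last letter -/
noncomputable def Dn (P : Matrix (Fin N) (Fin N) ℝ) (θ : ℝ) (n : ℕ) : Finset (List (Fin N)) :=
  (Lw N n).filter fun l => adm P l ∧ θ ≤ pword P l.dropLast ∧ pword P l < θ

open Classical in
/-- words of length `n+1` not yet stopped -/
noncomputable def Wn (P : Matrix (Fin N) (Fin N) ℝ) (θ : ℝ) (n : ℕ) : Finset (List (Fin N)) :=
  (Lw N n).filter fun l => θ ≤ pword P l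

theorem Lw_disj {m n : ℕ} (h : m ≠ n) : Disjoint (Lw N m) (Lw N n) := by
  rw [Finset.disjoint_left]
  intro l h1 h2
  rw [mem_Lw] at h1 h2
  omega

theorem P_le_one {P : Matrix (Fin N) (Fin N) ℝ}
    (hnn : ∀ i j, 0 ≤ P i j) (hrow : ∀ i, ∑ j, P i j = 1) (i j) : P i j ≤ 1 := by
  rw [← hrow i]
  exact single_le_sum (f := fun j => P i j) (fun j _ => hnn i j) (mem_univ j)

open Classical in
theorem stop_sum {P : Matrix (Fin N) (Fin N) ℝ}
    (hnn : ∀ i j, 0 ≤ P i j) (hrow : ∀ i, ∑ j, P i j = 1) (θ : ℝ) (h1 : θ ≤ 1)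
    (Φ : List (Fin N) → ℝ) (hΦ : ∀ l a, ∑ b, Φ (l ++ [a] ++ [b]) = Φ (l ++ [a]))
    (hz : ∀ l, l ≠ [] → ¬ adm P l → Φ l = 0) (K : ℕ) :
    ∑ n ∈ range (K + 1), ∑ l ∈ Dn P θ n, Φ l + ∑ l ∈ Wn P θ K, Φ l = ∑ a, Φ [a] := by
  induction K with
  | zero =>
    simp only [zero_add, range_one, sum_singleton, Dn, Wn, sum_filter, sum_Lw_zero, pword_single]
    simp [not_lt.2 h1, h1]
  | succ K ih =>
    rw [← ih, sum_range_succ _ (K + 1), add_assoc]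
    congr 1
    simp only [Dn, Wn, sum_filter]
    rw [sum_Lw_succ, sum_Lw_succ, ← sum_add_distrib]
    refine sum_congr rfl fun l hl => ?_
    rw [mem_Lw] at hl
    rcases List.eq_nil_or_concat l with rfl | ⟨l', a, rfl⟩
    · simp at hl
    simp only [List.concat_eq_append]
    rw [← sum_add_distrib]
    have : ∀ b, ((if adm P (l' ++ [a] ++ [b]) ∧ θ ≤ pword P (l' ++ [a] ++ [b]).dropLast ∧
          pword P (l' ++ [a] ++ [b]) < θ then Φ (l' ++ [a] ++ [b]) else 0) +
        if θ ≤ pword P (l' ++ [a] ++ [b]) then Φ (l' ++ [a] ++ [b]) else 0) =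
        if θ ≤ pword P (l' ++ [a]) then Φ (l' ++ [a] ++ [b]) else 0 := by
      intro b
      rw [List.dropLast_concat]
      have hle : pword P (l' ++ [a] ++ [b]) ≤ pword P (l' ++ [a]) := by
        rw [pword_snoc]
        exact mul_le_of_le_one_right (pword_nonneg hnn _) (P_le_one hnn hrow _ _)
      by_cases hadm : adm P (l' ++ [a] ++ [b])
      · by_cases hx : θ ≤ pword P (l' ++ [a] ++ [b])
        · simp only [hx, hx.trans hle, not_lt.2 hx]; simp
        · simp only [hx, not_le.1 hx, hadm]; simp
      · simp only [hz _ (by simp) hadm, ite_self, add_zero]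
    rw [sum_congr rfl fun b _ => this b]
    split_ifs
    · exact hΦ l' a
    · simp

open Classical in
theorem cut_stop {P : Matrix (Fin N) (Fin N) ℝ}
    (hnn : ∀ i j, 0 ≤ P i j) (hrow : ∀ i, ∑ j, P i j = 1) (θ : ℝ) (h1 : θ ≤ 1) (K : ℕ) :
    IsCut P ((range (K + 1)).biUnion (Dn P θ) ∪ Wn P θ K) := by
  constructor
  · intro l hl h0
    simp only [mem_union, mem_biUnion, Dn, Wn, mem_filter, mem_Lw, h0] at hl
    simp at hl
  · intro Φ hΦ hz
    rw [← stop_sum hnn hrow θ h1 Φ hΦ hz K, sum_union, sum_biUnion]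
    · intro m _ n _ hmn
      exact (Lw_disj hmn).mono (filter_subset _ _) (filter_subset _ _)
    · rw [Finset.disjoint_left]
      intro l hl hl2
      simp only [mem_biUnion, Dn, Wn, mem_filter] at hl hl2
      obtain ⟨_, _, _, h⟩ := hl
      linarith [h.2.2, hl2.2]

theorem gamma_le {P : Matrix (Fin N) (Fin N) ℝ}
    (hnn : ∀ i j, 0 ≤ P i j) (hrow : ∀ i, ∑ j, P i j = 1) (x0 : Fin N)
    (f h : Fin N → ℝ) (γ : ℝ) (hh : ∀ i, f i + ∑ j, P i j * h j = h i + γ) : ∃ i, γ ≤ f i := by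
  obtain ⟨z, hz⟩ := @Finite.exists_max _ _ _ ⟨x0⟩ _ h
  refine ⟨z, ?_⟩
  have e1 : ∑ j, P z j * h j ≤ h z := by
    calc _ ≤ ∑ j, P z j * h z := sum_le_sum fun j _ => mul_le_mul_of_nonneg_left (hz j) (hnn _ _)
      _ = h z := by rw [← sum_mul, hrow, one_mul]
  linarith [hh z]

theorem gammaP_neg {P : Matrix (Fin N) (Fin N) ℝ}
    (hnn : ∀ i j, 0 ≤ P i j) (hrow : ∀ i, ∑ j, P i j = 1)
    (hirr : ∀ i j, ∃ m, 1 ≤ m ∧ 0 < (P ^ m) i j)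
    (i0 j0 : Fin N) (h0 : 0 < P i0 j0) (h1 : P i0 j0 < 1)
    (h : Fin N → ℝ) (γ : ℝ)
    (hh : ∀ i, ∑ j, P i j * Real.log (P i j) + ∑ j, P i j * h j = h i + γ) : γ < 0 := by
  by_contra hcon
  push Not at hcon
  have ht : ∀ i j, P i j * Real.log (P i j) ≤ 0 := fun i j =>
    mul_nonpos_of_nonneg_of_nonpos (hnn i j) (Real.log_nonpos (hnn i j) (P_le_one hnn hrow i j))
  have hf : ∀ i, ∑ j, P i j * Real.log (P i j) ≤ 0 := fun i => sum_nonpos fun j _ => ht i j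
  have hconst := max_principle P hnn hrow hirr h (fun i => by linarith [hh i, hf i])
  have e : ∑ j, P i0 j * h j = h i0 := by
    rw [sum_congr rfl fun j _ => by rw [hconst j i0], ← sum_mul, hrow, one_mul]
  have hlt : ∑ j, P i0 j * Real.log (P i0 j) < 0 := by
    refine sum_neg' (fun j _ => ht i0 j) ⟨j0, mem_univ _, mul_neg_of_pos_of_neg h0 (Real.log_neg h0 h1)⟩
  linarith [hh i0]

theorem pword_le_one {P : Matrix (Fin N) (Fin N) ℝ}
    (hnn : ∀ i j, 0 ≤ P i j) (hrow : ∀ i, ∑ j, P i j = 1) (l : List (Fin N)) :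
    pword P l ≤ 1 := by
  by_cases hl : l = []
  · simp [hl, pword]
  refine snoc_ind (p := fun l => pword P l ≤ 1) ?_ ?_ l hl
  · intro a; simp [pword]
  · intro l a b ih
    rw [pword_snoc]
    exact mul_le_one₀ ih (hnn _ _) (P_le_one hnn hrow _ _)

/-- alive words have bounded length -/
theorem alive_bdd {P : Matrix (Fin N) (Fin N) ℝ}
    (hnn : ∀ i j, 0 ≤ P i j) (hrow : ∀ i, ∑ j, P i j = 1)
    (hirr : ∀ i j, ∃ m, 1 ≤ m ∧ 0 < (P ^ m) i j)
    (q : Fin N → ℝ) (hq : ∀ i, 0 < q i) (hq1 : ∑ i, q i = 1)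
    (i0 j0 : Fin N) (h0 : 0 < P i0 j0) (h1 : P i0 j0 < 1)
    (pmin : ℝ) (hp0 : 0 < pmin) (hp : ∀ i j, 0 < P i j → pmin ≤ P i j)
    (θ : ℝ) (hθ : 0 < θ) (hθ1 : θ ≤ 1) : ∃ K : ℕ, ∀ n, K ≤ n → Wn P θ n = ∅ := by
  classical
  obtain ⟨h, γ, hh⟩ := poisson P hnn hrow hirr i0 (fun i => ∑ j, P i j * Real.log (P i j))
  have hγ := gammaP_neg hnn hrow hirr i0 j0 h0 h1 h γ hh
  obtain ⟨C, hC⟩ := cut_bound (A := P) hnn hrow q hq hq1 (fun i j h => h) h γ hh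
  obtain ⟨z, hz⟩ := @Finite.exists_min _ _ _ ⟨i0⟩ _ q
  have hδ : 0 < -γ * (q z * θ) := mul_pos (by linarith) (mul_pos (hq z) hθ)
  obtain ⟨K, hK⟩ := exists_nat_gt ((C + |Real.log (θ * pmin)|) / (-γ * (q z * θ)))
  refine ⟨K, fun n hn => ?_⟩
  by_contra hne
  obtain ⟨w, hw⟩ := Finset.nonempty_iff_ne_empty.2 hne
  have hpm1 : pmin ≤ 1 := (hp _ _ h0).trans h1.le
  set B := (range (n + 1)).biUnion (Dn P θ) ∪ Wn P θ n with hBdef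
  have hcut : IsCut P B := cut_stop hnn hrow θ hθ1 n
  have hwB : w ∈ B := mem_union_right _ hw
  have hlow : ∀ l ∈ B, θ * pmin ≤ pword P l := by
    intro l hl
    simp only [hBdef, mem_union, mem_biUnion, Dn, Wn, mem_filter, mem_Lw] at hl
    rcases hl with ⟨k, _, hk, hadm, ha, hb⟩ | ⟨_, ha⟩
    · rcases List.eq_nil_or_concat l with rfl | ⟨l', b, rfl⟩
      · simp at hk
      simp only [List.concat_eq_append] at *
      rcases List.eq_nil_or_concat l' with rfl | ⟨l'', a, rfl⟩
      · simp only [List.nil_append, pword_single]; nlinarith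
      simp only [List.concat_eq_append] at *
      rw [List.dropLast_concat] at ha
      rw [adm_snoc] at hadm
      rw [pword_snoc]
      exact mul_le_mul ha (hp _ _ hadm.2) hp0.le (pword_nonneg hnn _)
    · nlinarith
  have hm0 : ∀ l ∈ B, 0 ≤ mlist q P l := fun l hl => mlist_nonneg hnn q hq l (hcut.1 l hl)
  have b1 := hC B hcut
  have b2 := sum_weighted_abs_le (mlist q P) (fun l => Real.log (pword P l)) B
    |Real.log (θ * pmin)| hm0 (cut_mass hnn hrow q hq1 B hcut) (fun l hl => by
      have hpos : 0 < θ * pmin := mul_pos hθ hp0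
      have a1 : Real.log (pword P l) ≤ 0 := Real.log_nonpos (pword_nonneg hnn _)
        (pword_le_one hnn hrow l)
      have a2 := Real.log_le_log hpos (hlow l hl)
      rw [abs_of_nonpos a1, abs_of_nonpos (a2.trans a1)]
      linarith)
  have hwlen : w.length = n + 1 := by
    simp only [Wn, mem_filter, mem_Lw] at hw; exact hw.1
  have hwp : θ ≤ pword P w := by
    simp only [Wn, mem_filter] at hw; exact hw.2
  have hmw : q z * θ ≤ mlist q P w := by
    cases w with
    | nil => simp at hwlen
    | cons a w =>
      simp only [mlist, List.map_cons, List.headI_cons]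
      exact mul_le_mul (hz a) hwp hθ.le (hq a).le
  have b3 : mlist q P w * ((w.length : ℝ) - 1) ≤
      ∑ l ∈ B, mlist q P l * ((l.length : ℝ) - 1) :=
    single_le_sum (f := fun l : List (Fin N) => mlist q P l * ((l.length : ℝ) - 1)) (fun l hl => by
      refine mul_nonneg (hm0 l hl) ?_
      have : 1 ≤ l.length := List.length_pos_iff.2 (hcut.1 l hl)
      have : (1 : ℝ) ≤ l.length := by exact_mod_cast this
      linarith) hwB
  have b4 : q z * θ * n ≤ mlist q P w * ((w.length : ℝ) - 1) := by
    rw [hwlen]; push_cast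
    rw [add_sub_cancel_right]
    exact mul_le_mul_of_nonneg_right hmw (Nat.cast_nonneg n)
  rw [div_lt_iff₀ hδ] at hK
  have b5 : (K : ℝ) * (-γ * (q z * θ)) ≤ n * (-γ * (q z * θ)) :=
    mul_le_mul_of_nonneg_right (by exact_mod_cast hn) hδ.le
  have b6 : -γ * (q z * θ * n) ≤ -γ * ∑ l ∈ B, mlist q P l * ((l.length : ℝ) - 1) :=
    mul_le_mul_of_nonneg_left (b4.trans b3) (by linarith)
  have b7 := abs_le.1 b1
  have b8 := abs_le.1 b2
  nlinarith [b7.2, b8.1]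

theorem pword_ge_pow {P : Matrix (Fin N) (Fin N) ℝ}
    (pmin : ℝ) (hp0 : 0 < pmin) (hp : ∀ i j, 0 < P i j → pmin ≤ P i j)
    (l : List (Fin N)) (h : adm P l) : pmin ^ (l.length - 1) ≤ pword P l := by
  refine snoc_ind (p := fun l => adm P l → pmin ^ (l.length - 1) ≤ pword P l) ?_ ?_ l h.1 h
  · intro a _; simp [pword]
  · intro l a b ih h
    rw [adm_snoc] at h
    have := ih h.1
    rw [pword_snoc]
    simp only [List.length_append, List.length_singleton, Nat.add_sub_cancel] at this ⊢
    rw [pow_succ]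
    exact mul_le_mul this (hp _ _ h.2) hp0.le (adm_pos _ h.1).le

theorem ratio_bound (γ lam C n u v : ℝ) (hl : lam < 0) (hC : 0 ≤ C)
    (hu : |u - γ * n| ≤ C) (hv : |v - lam * n| ≤ C) (hn : 0 < n) (hn2 : 2 * C ≤ -lam * n) :
    |u / v - γ / lam| ≤ (2 * C * (-lam + |γ|) / lam ^ 2) / n := by
  have hv2 := abs_le.1 hv
  have hv0 : v ≤ lam * n / 2 := by linarith [hv2.2]
  have hln : lam * n < 0 := mul_neg_of_neg_of_pos hl hn
  have hvneg : v < 0 := by linarith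
  have e : u / v - γ / lam = ((u - γ * n) * lam - γ * (v - lam * n)) / (v * lam) := by
    field_simp [hvneg.ne, hl.ne]; ring
  have hvl : 0 < v * lam := mul_pos_of_neg_of_neg hvneg hl
  rw [e, abs_div, abs_of_pos hvl, div_div, div_le_div_iff₀ hvl (mul_pos (by nlinarith) hn)]
  have a1 : |(u - γ * n) * lam - γ * (v - lam * n)| ≤ C * (-lam + |γ|) := by
    refine (abs_sub _ _).trans ?_
    rw [abs_mul, abs_mul, abs_of_neg hl]
    nlinarith [abs_nonneg γ]
  have a2 : lam ^ 2 * n ≤ 2 * (v * lam) := by nlinarith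
  have a3 : 0 ≤ C * (-lam + |γ|) := mul_nonneg hC (by linarith [abs_nonneg γ])
  calc _ ≤ (C * (-lam + |γ|)) * (lam ^ 2 * n) :=
        mul_le_mul_of_nonneg_right a1 (by positivity)
    _ ≤ (C * (-lam + |γ|)) * (2 * (v * lam)) := mul_le_mul_of_nonneg_left a2 a3
    _ = _ := by ring

theorem cut_bound_u {P : Matrix (Fin N) (Fin N) ℝ}
    (hnn : ∀ i j, 0 ≤ P i j) (hrow : ∀ i, ∑ j, P i j = 1)
    (q : Fin N → ℝ) (hq : ∀ i, 0 < q i) (hq1 : ∑ i, q i = 1)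
    (h : Fin N → ℝ) (γ : ℝ)
    (hh : ∀ i, ∑ j, P i j * Real.log (P i j) + ∑ j, P i j * h j = h i + γ) :
    ∃ C : ℝ, ∀ B, IsCut P B →
      |∑ l ∈ B, mlist q P l * Real.log (mlist q P l) -
        γ * ∑ l ∈ B, mlist q P l * ((l.length : ℝ) - 1)| ≤ C := by
  obtain ⟨C, hC⟩ := cut_bound (A := P) hnn hrow q hq hq1 (fun i j h => h) h γ hh
  refine ⟨C + ∑ a, |Real.log (q a)|, fun B hB => ?_⟩
  have e : ∑ l ∈ B, mlist q P l * Real.log (mlist q P l) =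
      ∑ l ∈ B, mlist q P l * Real.log (pword P l) +
        ∑ l ∈ B, mlist q P l * Real.log ((l.map q).headI) := by
    rw [← sum_add_distrib]
    refine sum_congr rfl fun l hl => ?_
    by_cases hadm : adm P l
    · have h1 := adm_pos l hadm
      cases l with
      | nil => exact absurd rfl (hB.1 _ hl)
      | cons a l =>
        rw [← mul_add]
        congr 1
        simp only [mlist, List.map_cons, List.headI_cons]
        rw [Real.log_mul (hq a).ne' h1.ne', add_comm]
    · rw [mlist_zero hnn q l (hB.1 l hl) hadm]; ring
  rw [e, add_sub_right_comm]
  refine (abs_add_le _ _).trans (add_le_add (hC B hB) ?_)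
  refine sum_weighted_abs_le _ _ B _ (fun l hl => mlist_nonneg hnn q hq l (hB.1 l hl))
        (cut_mass hnn hrow q hq1 B hB) (fun l hl => ?_)
  cases l with
  | nil => exact absurd rfl (hB.1 _ hl)
  | cons a l =>
    simp only [List.map_cons, List.headI_cons]
    exact single_le_sum (f := fun a => |Real.log (q a)|) (fun j _ => abs_nonneg _) (mem_univ a)

end aux

theorem stmt9 {N : ℕ} (P c : Matrix (Fin N) (Fin N) ℝ)
    (hnn : ∀ i j, 0 ≤ P i j) (hrow : ∀ i, ∑ j, P i j = 1)
    (hirr : ∀ i j, ∃ m, 1 ≤ m ∧ 0 < (P ^ m) i j)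
    (hc : ∀ i j, 0 < P i j → 0 < c i j ∧ c i j < 1)
    (hc0 : ∀ i j, P i j = 0 → c i j = 0)
    (q : Fin N → ℝ) (hq : ∀ i, 0 < q i) (hq1 : ∑ i, q i = 1)
    (pmin : ℝ) (hpmin : pmin = sInf {x : ℝ | ∃ i j, 0 < P i j ∧ P i j = x})
    (Λ : ℕ → Set (List (Fin N)))
    (hΛ : ∀ j, Λ j = {l | adm P l ∧
      pmin ^ j ≤ pword P l.dropLast ∧ pword P l < pmin ^ j})
    (k1 k2 : ℕ → ℕ)
    (hk1 : ∀ j, k1 j = sInf (List.length '' Λ j))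
    (hk2 : ∀ j, k2 j = sSup (List.length '' Λ j))
    (t : ℕ → ℝ)
    (ht : ∀ j, t j = (∑ᶠ σ ∈ Λ j, mlist q P σ * Real.log (mlist q P σ)) /
                     (∑ᶠ σ ∈ Λ j, mlist q P σ * Real.log (pword c σ)))
    (s : ℕ → ℝ) (hs : ∀ k, s k = useq q P k / lseq q P c k) :
    ∃ C3 : ℝ, ∃ J : ℕ, ∀ j : ℕ, J ≤ j →
      ∃ kj1 ∈ Set.Icc (k1 j) (k2 j), ∃ kj2 ∈ Set.Icc (k1 j) (k2 j),
        s kj1 - C3 / (j : ℝ) ≤ t j ∧ t j ≤ s kj2 + C3 / (j : ℝ) := by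
  classical
  have hx0 : Nonempty (Fin N) := by
    by_contra hne
    rw [not_nonempty_iff] at hne
    simp at hq1
  obtain ⟨x0⟩ := hx0
  have hposex : ∀ i, ∃ j, 0 < P i j := by
    intro i
    by_contra hcon
    push Not at hcon
    have := hrow i
    rw [sum_eq_zero fun j _ => le_antisymm (hcon j) (hnn i j)] at this
    norm_num at this
  have hfin : {x : ℝ | ∃ i j, 0 < P i j ∧ P i j = x}.Finite := by
    refine (Set.finite_range (fun ij : Fin N × Fin N => P ij.1 ij.2)).subset ?_
    rintro x ⟨i, j, _, rfl⟩
    exact ⟨(i, j), rfl⟩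
  have hne : {x : ℝ | ∃ i j, 0 < P i j ∧ P i j = x}.Nonempty := by
    obtain ⟨j, hj⟩ := hposex x0
    exact ⟨_, x0, j, hj, rfl⟩
  have hp : ∀ i j, 0 < P i j → pmin ≤ P i j := by
    intro i j hij
    rw [hpmin]
    exact csInf_le hfin.bddBelow ⟨i, j, hij, rfl⟩
  have hatt : ∃ i j, 0 < P i j ∧ P i j = pmin := by
    have := hne.csInf_mem hfin
    rw [← hpmin] at this
    exact this
  have hp0 : 0 < pmin := by
    obtain ⟨i, j, h1, h2⟩ := hatt
    rw [← h2]; exact h1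
  have hp1 : pmin ≤ 1 := by
    obtain ⟨i, j, h1, h2⟩ := hatt
    rw [← h2]; exact P_le_one hnn hrow i j
  rcases hp1.eq_or_lt with hpe | hplt
  · -- degenerate case
    refine ⟨0, 0, fun j _ => ?_⟩
    have hemp : Λ j = ∅ := by
      rw [hΛ, Set.eq_empty_iff_forall_notMem]
      rintro l ⟨h1, h2, h3⟩
      have := pword_ge_pow pmin hp0 hp l h1
      rw [hpe, one_pow] at this h3
      linarith
    have hs0 : s 0 = 0 := by
      rw [hs]
      have : lseq q P c 0 = 0 := by
        unfold lseq
        refine sum_eq_zero fun σ _ => ?_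
        simp [wprod]
      rw [this, div_zero]
    have ht0 : t j = 0 := by
      rw [ht, hemp]; simp
    refine ⟨0, ?_, 0, ?_, ?_⟩
    · rw [hk1, hk2, hemp]; simp
    · rw [hk1, hk2, hemp]; simp
    · rw [hs0, ht0]; simp
  obtain ⟨i0, j0, h00, h01⟩ := hatt
  obtain ⟨h, γ, hh⟩ := poisson P hnn hrow hirr x0 (fun i => ∑ j, P i j * Real.log (P i j))
  obtain ⟨h', lam, hh'⟩ := poisson P hnn hrow hirr x0 (fun i => ∑ j, P i j * Real.log (c i j))
  have hlam : lam < 0 := by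
    obtain ⟨i, hi⟩ := gamma_le hnn hrow x0 _ h' lam hh'
    refine lt_of_le_of_lt hi ?_
    refine sum_neg' (fun j _ => ?_) ?_
    · rcases (hnn i j).eq_or_lt with h0 | h0
      · rw [← h0, zero_mul]
      · exact (mul_neg_of_pos_of_neg h0 (Real.log_neg (hc i j h0).1 (hc i j h0).2)).le
    · obtain ⟨j, hj⟩ := hposex i
      exact ⟨j, mem_univ _, mul_neg_of_pos_of_neg hj (Real.log_neg (hc i j hj).1 (hc i j hj).2)⟩
  obtain ⟨C1, hC1⟩ := cut_bound_u hnn hrow q hq hq1 h γ hh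
  obtain ⟨C2, hC2⟩ := cut_bound (A := c) hnn hrow q hq hq1 (fun i j h => (hc i j h).1) h' lam hh'
  set C := max C1 C2 with hCdef
  have hC0 : 0 ≤ C := (abs_nonneg _).trans ((hC1 _ (isCut_Lw P 0)).trans (le_max_left _ _))
  set D := 2 * C * (-lam + |γ|) / lam ^ 2 with hD
  have hD0 : 0 ≤ D := div_nonneg (mul_nonneg (by linarith) (by linarith [abs_nonneg γ])) (sq_nonneg _)
  obtain ⟨J, hJ⟩ := exists_nat_gt (2 * C / (-lam))
  have hcutbound : ∀ B, IsCut P B → ∀ j : ℕ, J + 1 ≤ j →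
      (∀ l ∈ B, j + 1 ≤ l.length) →
      |(∑ l ∈ B, mlist q P l * Real.log (mlist q P l)) /
        (∑ l ∈ B, mlist q P l * Real.log (pword c l)) - γ / lam| ≤ D / j := by
    intro B hB j hj hlen
    set T := ∑ l ∈ B, mlist q P l * ((l.length : ℝ) - 1) with hT
    have hjpos : (0 : ℝ) < j := by
      have : 0 < j := by omega
      exact_mod_cast this
    have hTj : (j : ℝ) ≤ T := by
      calc (j : ℝ) = ∑ l ∈ B, mlist q P l * j := by
            rw [← sum_mul, cut_mass hnn hrow q hq1 B hB, one_mul]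
        _ ≤ T := sum_le_sum fun l hl => by
            refine mul_le_mul_of_nonneg_left ?_ (mlist_nonneg hnn q hq l (hB.1 l hl))
            have : ((j + 1 : ℕ) : ℝ) ≤ l.length := by exact_mod_cast hlen l hl
            push_cast at this
            linarith
    have hJj : (J : ℝ) ≤ j := by
      have : J ≤ j := by omega
      exact_mod_cast this
    have hlarge : 2 * C ≤ -lam * T := by
      rw [div_lt_iff₀ (by linarith)] at hJ
      nlinarith
    refine (ratio_bound γ lam C T _ _ hlam hC0 ((hC1 B hB).trans (le_max_left _ _))
      ((hC2 B hB).trans (le_max_right _ _)) (hjpos.trans_le hTj) hlarge).trans ?_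
    exact div_le_div_of_nonneg_left hD0 hjpos hTj
  refine ⟨2 * D, J + 1, fun j hj => ?_⟩
  have hθ : 0 < pmin ^ j := pow_pos hp0 j
  have hθ1 : pmin ^ j ≤ 1 := pow_le_one₀ hp0.le hp1
  obtain ⟨K, hK⟩ := alive_bdd hnn hrow hirr q hq hq1 i0 j0 h00 (h01 ▸ hplt) pmin hp0 hp
    (pmin ^ j) hθ hθ1
  set B := (range (K + 1)).biUnion (Dn P (pmin ^ j)) with hBdef
  have hcut : IsCut P B := by
    have := cut_stop hnn hrow (pmin ^ j) hθ1 K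
    rwa [hK K le_rfl, union_empty] at this
  have hΛB : Λ j = ↑B := by
    rw [hΛ]
    ext l
    simp only [Set.mem_setOf_eq, hBdef, coe_biUnion, Set.mem_iUnion, mem_coe, Dn, mem_filter,
      mem_Lw, mem_range, exists_prop]
    constructor
    · rintro ⟨h1, h2, h3⟩
      rcases List.eq_nil_or_concat l with rfl | ⟨l', b, rfl⟩
      · exact absurd rfl h1.1
      simp only [List.concat_eq_append, List.dropLast_concat] at *
      refine ⟨l'.length, ?_, by simp, h1, h2, h3⟩
      by_contra hcon
      have : l' ∈ Wn P (pmin ^ j) (l'.length - 1) := by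
        simp only [Wn, mem_filter, mem_Lw]
        exact ⟨by omega, h2⟩
      rw [hK _ (by omega)] at this
      simp at this
    · rintro ⟨n, _, _, h1, h2, h3⟩
      exact ⟨h1, h2, h3⟩
  have hlenB : ∀ l ∈ B, j + 1 ≤ l.length := by
    intro l hl
    have hl' : l ∈ Λ j := by rw [hΛB]; exact_mod_cast hl
    rw [hΛ] at hl'
    obtain ⟨h1, h2, h3⟩ := hl'
    have h4 := (pword_ge_pow pmin hp0 hp l h1).trans_lt h3
    have h5 := (pow_lt_pow_iff_right_of_lt_one₀ hp0 hplt).1 h4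
    omega
  have hBne : B.Nonempty := by
    by_contra hcon
    rw [not_nonempty_iff_eq_empty] at hcon
    have := cut_mass hnn hrow q hq1 B hcut
    rw [hcon] at this
    simp at this
  have himne : (List.length '' Λ j).Nonempty := by
    rw [hΛB]; exact (coe_nonempty.2 hBne).image _
  have hbdd : BddAbove (List.length '' Λ j) := by
    rw [hΛB]; exact (B.finite_toSet.image _).bddAbove
  have hk1mem : k1 j ∈ List.length '' Λ j := by
    rw [hk1]; exact Nat.sInf_mem himne
  have hk12 : k1 j ≤ k2 j := by
    rw [hk2]; exact le_csSup hbdd hk1mem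
  have hk1j : j + 1 ≤ k1 j := by
    obtain ⟨l, hl, hl2⟩ := hk1mem
    rw [← hl2]
    rw [hΛB] at hl
    exact hlenB l (by exact_mod_cast hl)
  have ht1 : |t j - γ / lam| ≤ D / j := by
    rw [ht, hΛB, finsum_mem_coe_finset, finsum_mem_coe_finset]
    exact hcutbound B hcut j hj hlenB
  have hs1 : |s (k1 j) - γ / lam| ≤ D / j := by
    have := hcutbound _ (isCut_Lw P (k1 j - 1)) j hj (fun l hl => by
      rw [mem_Lw] at hl; omega)
    rw [sum_Lw, sum_Lw] at this
    simp only [mlist_ofFn, ← wprod_eq] at this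
    rw [hs]
    exact this
  have e : 2 * D / (j : ℝ) = D / j + D / j := by ring
  have t1 := abs_le.1 ht1
  have s1 := abs_le.1 hs1
  refine ⟨k1 j, ⟨le_rfl, hk12⟩, k1 j, ⟨le_rfl, hk12⟩, ?_, ?_⟩
  · rw [e]; linarith [t1.1, s1.2]
  · rw [e]; linarith [t1.2, s1.1]
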